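/- Let E > 0. For all n, m ∈ ℕ₀ and both signs, the regularized integral of F^±_{n,m} over ℝ² exists and equals the Kronecker delta: lim_{ε→0⁺} ∬_{ℝ²} e^{−ε(t²+x²)} F^±_{n,m}(t,x) dt dx = δ_{nm}. -/

import Mathlib

open MeasureTheory Filter Complex

/-- The explicit expression `F^±_{m,n}` for `m ≥ n` (sign `s = ±1`). -/
noncomputable def Fge (E s : ℝ) (m n : ℕ) (t x : ℝ) : ℂ :=
  ((E / (2 * Real.pi) : ℝ) : ℂ) * ((Real.sqrt (m.factorial * n.factorial) : ℝ) : ℂ) *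
    Complex.exp (-(s : ℂ) * Complex.I * (E : ℂ) * ((t : ℂ) ^ 2 - (x : ℂ) ^ 2) / 2) *
    (Complex.exp ((s : ℂ) * Complex.I * (Real.pi : ℂ) / 4) * ((Real.sqrt E : ℝ) : ℂ)) ^ (m - n) *
    ((t : ℂ) - (s : ℂ) * (x : ℂ)) ^ (m - n) *
    ∑ p ∈ Finset.range (n + 1),
      ((s : ℂ) * Complex.I * (E : ℂ) * ((t : ℂ) ^ 2 - (x : ℂ) ^ 2)) ^ (n - p) * (-1 : ℂ) ^ p /
        (((m - p).factorial : ℂ) * ((n - p).factorial : ℂ) * (p.factorial : ℂ))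

/-- `F^±_{m,n}` for all `m, n`, with `F^±_{m,n} := conj(F^∓_{n,m})` when `m < n`. -/
noncomputable def Fmn (E s : ℝ) (m n : ℕ) (t x : ℝ) : ℂ :=
  if n ≤ m then Fge E s m n t x else (starRingEnd ℂ) (Fge E (-s) n m t x)

/-- Gaussian moments, defined by their recursion. -/
noncomputable def gmom (b : ℂ) : ℕ → ℂ
  | 0 => ((Real.pi : ℂ) / b) ^ (1 / 2 : ℂ)
  | 1 => 0
  | (j + 2) => ((j : ℂ) + 1) / (2 * b) * gmom b j

theorem gmom_rec (b : ℂ) (hb : b ≠ 0) (j : ℕ) :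
    2 * b * gmom b (j + 1) = (j : ℂ) * gmom b (j - 1) := by
  cases j with
  | zero => simp [gmom]
  | succ j =>
    simp only [gmom, Nat.add_sub_cancel]
    push_cast
    field_simp

theorem gint (b : ℂ) (hb : 0 < b.re) (j : ℕ) :
    Integrable (fun t : ℝ => (t : ℂ) ^ j * cexp (-b * (t : ℂ) ^ 2)) := by
  have h := integrable_rpow_mul_exp_neg_mul_sq hb (s := (j : ℝ)) (by
    have : (0 : ℝ) ≤ j := Nat.cast_nonneg j
    linarith)
  refine h.mono (by fun_prop) (Eventually.of_forall fun t => ?_)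
  rw [norm_mul, norm_cexp_neg_mul_sq, norm_mul, Real.rpow_natCast]
  simp

theorem gmom_eq (b : ℂ) (hb : 0 < b.re) (j : ℕ) :
    ∫ t : ℝ, (t : ℂ) ^ j * cexp (-b * (t : ℂ) ^ 2) = gmom b j := by
  have hb0 : b ≠ 0 := by
    rintro rfl
    simp at hb
  have key : ∀ j : ℕ, 2 * b * ∫ t : ℝ, (t : ℂ) ^ (j + 1) * cexp (-b * (t : ℂ) ^ 2)
      = (j : ℂ) * ∫ t : ℝ, (t : ℂ) ^ (j - 1) * cexp (-b * (t : ℂ) ^ 2) := by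
    intro j
    have hd : ∀ t : ℝ, HasDerivAt (fun t : ℝ => (t : ℂ) ^ j * cexp (-b * (t : ℂ) ^ 2))
        ((j : ℂ) * ((t : ℂ) ^ (j - 1) * cexp (-b * (t : ℂ) ^ 2))
          - 2 * b * ((t : ℂ) ^ (j + 1) * cexp (-b * (t : ℂ) ^ 2))) t := by
      intro t
      have h1 : HasDerivAt (fun z : ℂ => z ^ j * cexp (-b * z ^ 2))
        ((j : ℂ) * ((t : ℂ) ^ (j - 1) * cexp (-b * (t : ℂ) ^ 2))
          - 2 * b * ((t : ℂ) ^ (j + 1) * cexp (-b * (t : ℂ) ^ 2))) (t : ℂ) := by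
        have h2 := (hasDerivAt_pow j (t : ℂ)).mul
          (((hasDerivAt_pow 2 (t : ℂ)).const_mul (-b)).cexp)
        refine h2.congr_deriv ?_
        simp
        ring
      exact h1.comp_ofReal
    have h0 := integral_eq_zero_of_hasDerivAt_of_integrable hd
      (((gint b hb _).const_mul _).sub ((gint b hb _).const_mul _)) (gint b hb j)
    rw [integral_sub ((gint b hb _).const_mul _) ((gint b hb _).const_mul _),
      integral_const_mul, integral_const_mul] at h0
    exact (sub_eq_zero.mp h0).symm
  induction j using Nat.strong_induction_on with
  | _ j ih =>
    match j with
    | 0 => simpa [gmom] using integral_gaussian_complex hb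
    | (j + 1) =>
      have h1 := key j
      have h2 := gmom_rec b hb0 j
      rw [ih (j - 1) (by omega), ← h2] at h1
      exact mul_left_cancel₀ (by simpa using hb0) h1

theorem gmom_cont (b : ℂ) (hb : b.im ≠ 0) (j : ℕ) :
    ContinuousAt (fun b => gmom b j) b := by
  have hb0 : b ≠ 0 := by
    rintro rfl
    simp at hb
  induction j using Nat.strong_induction_on with
  | _ j ih =>
    match j with
    | 0 =>
      simp only [gmom]
      refine ContinuousAt.cpow (by fun_prop (disch := assumption)) (by fun_prop) ?_
      right
      rw [Complex.div_im]
      simp [Real.pi_ne_zero, hb, hb0]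
    | 1 => simpa [gmom] using continuousAt_const
    | (j + 2) =>
      simp only [gmom]
      have := ih j (by omega)
      have h2 : 2 * b ≠ 0 := by simpa using hb0
      fun_prop (disch := assumption)

/-- The limiting functional on polynomials in two variables. -/
noncomputable def gL (b : ℂ) : MvPolynomial (Fin 2) ℂ →ₗ[ℂ] ℂ :=
  (MvPolynomial.basisMonomials (Fin 2) ℂ).constr ℂ fun d => gmom b (d 0) * gmom (-b) (d 1)

theorem gL_mono (b c : ℂ) (d : Fin 2 →₀ ℕ) :
    gL b (MvPolynomial.monomial d c) = c * (gmom b (d 0) * gmom (-b) (d 1)) := by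
  have h : MvPolynomial.monomial d c = c • (MvPolynomial.basisMonomials (Fin 2) ℂ) d := by
    simp [MvPolynomial.smul_monomial]
  rw [h, map_smul, gL, Module.Basis.constr_basis, smul_eq_mul]

theorem gL_d0 (b : ℂ) (hb : b ≠ 0) (P : MvPolynomial (Fin 2) ℂ) :
    gL b (MvPolynomial.pderiv 0 P) = 2 * b * gL b (MvPolynomial.X 0 * P) := by
  induction P using MvPolynomial.induction_on' with
  | monomial d c =>
    rw [MvPolynomial.pderiv_monomial, MvPolynomial.X, MvPolynomial.monomial_mul, gL_mono, gL_mono]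
    have := gmom_rec b hb (d 0)
    simp [add_comm 1 (d 0)]
    linear_combination (-c * gmom (-b) (d 1)) * this
  | add p q hp hq => simp only [map_add, mul_add, hp, hq]

theorem gL_d1 (b : ℂ) (hb : b ≠ 0) (P : MvPolynomial (Fin 2) ℂ) :
    gL b (MvPolynomial.pderiv 1 P) = -(2 * b) * gL b (MvPolynomial.X 1 * P) := by
  induction P using MvPolynomial.induction_on' with
  | monomial d c =>
    rw [MvPolynomial.pderiv_monomial, MvPolynomial.X, MvPolynomial.monomial_mul, gL_mono, gL_mono]
    have := gmom_rec (-b) (neg_ne_zero.mpr hb) (d 1)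
    simp [add_comm 1 (d 1)]
    linear_combination (-c * gmom b (d 0)) * this
  | add p q hp hq => simp only [map_add, mul_add, hp, hq]

theorem gL_rec (b s : ℂ) (hb : b ≠ 0) (hs : s * s = 1) (a c : ℕ) :
    2 * b * gL b ((MvPolynomial.X 0 - MvPolynomial.C s * MvPolynomial.X 1) ^ (a + 1) *
      (MvPolynomial.X 0 + MvPolynomial.C s * MvPolynomial.X 1) ^ c) =
    2 * (c : ℂ) * gL b ((MvPolynomial.X 0 - MvPolynomial.C s * MvPolynomial.X 1) ^ a *
      (MvPolynomial.X 0 + MvPolynomial.C s * MvPolynomial.X 1) ^ (c - 1)) := by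
  set u : MvPolynomial (Fin 2) ℂ := MvPolynomial.X 0 - MvPolynomial.C s * MvPolynomial.X 1 with hu
  set v : MvPolynomial (Fin 2) ℂ := MvPolynomial.X 0 + MvPolynomial.C s * MvPolynomial.X 1 with hv
  have h0 := gL_d0 b hb (u ^ a * v ^ c)
  have h1 := gL_d1 b hb (u ^ a * v ^ c)
  have hss : (MvPolynomial.C s * MvPolynomial.C s : MvPolynomial (Fin 2) ℂ) = 1 := by
    rw [← MvPolynomial.C_mul, hs, MvPolynomial.C_1]
  have e0u : MvPolynomial.pderiv 0 u = 1 := by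
    simp [hu, MvPolynomial.pderiv_X]
  have e0v : MvPolynomial.pderiv 0 v = 1 := by
    simp [hv, MvPolynomial.pderiv_X]
  have e1u : MvPolynomial.pderiv 1 u = - MvPolynomial.C s := by
    simp [hu, MvPolynomial.pderiv_X]
  have e1v : MvPolynomial.pderiv 1 v = MvPolynomial.C s := by
    simp [hv, MvPolynomial.pderiv_X]
  have e1 : MvPolynomial.pderiv 0 (u ^ a * v ^ c) + s • MvPolynomial.pderiv 1 (u ^ a * v ^ c)
      = (2 * (c : ℂ)) • (u ^ a * v ^ (c - 1)) := by
    rw [MvPolynomial.smul_eq_C_mul, MvPolynomial.smul_eq_C_mul,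
      MvPolynomial.pderiv_mul, MvPolynomial.pderiv_mul, MvPolynomial.pderiv_pow,
      MvPolynomial.pderiv_pow, MvPolynomial.pderiv_pow, MvPolynomial.pderiv_pow,
      e0u, e0v, e1u, e1v, MvPolynomial.C_mul]
    simp only [map_natCast, map_ofNat]
    linear_combination ((-(a : MvPolynomial (Fin 2) ℂ)) * u ^ (a - 1) * v ^ c
      + u ^ a * (c : MvPolynomial (Fin 2) ℂ) * v ^ (c - 1)) * hss
  have e2 : u ^ (a + 1) * v ^ c = MvPolynomial.X 0 * (u ^ a * v ^ c)
      - s • (MvPolynomial.X 1 * (u ^ a * v ^ c)) := by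
    rw [MvPolynomial.smul_eq_C_mul, pow_succ]
    nth_rewrite 2 [hu]
    ring
  have e3 := congrArg (gL b) e1
  rw [map_add, map_smul, map_smul, smul_eq_mul, smul_eq_mul] at e3
  rw [e2, map_sub, map_smul, smul_eq_mul, ← e3, h0, h1]
  ring

theorem gL_val (b s : ℂ) (hb : b ≠ 0) (hs : s * s = 1) (k j : ℕ) :
    (2 * b) ^ j * gL b ((MvPolynomial.X 0 - MvPolynomial.C s * MvPolynomial.X 1) ^ (k + j) *
      (MvPolynomial.X 0 + MvPolynomial.C s * MvPolynomial.X 1) ^ j) =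
    if k = 0 then 2 ^ j * (j.factorial : ℂ) * (gmom b 0 * gmom (-b) 0) else 0 := by
  induction j with
  | zero =>
    by_cases hk : k = 0
    · subst hk
      have := gL_mono b 1 0
      simpa using this
    · obtain ⟨k, rfl⟩ := Nat.exists_eq_succ_of_ne_zero hk
      have := gL_rec b s hb hs k 0
      simpa [hb] using this
  | succ j ih =>
    have := gL_rec b s hb hs (k + j) (j + 1)
    rw [Nat.add_sub_cancel] at this
    rw [pow_succ, mul_assoc, ← add_assoc, this, mul_left_comm, ih, Nat.factorial_succ]
    split_ifs
    · push_cast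
      ring
    · simp

theorem gL_tendsto (E s : ℝ) (hE : 0 < E) (hs : s = 1 ∨ s = -1) (P : MvPolynomial (Fin 2) ℂ) :
    (∀ ε : ℝ, 0 < ε → Integrable (fun p : ℝ × ℝ =>
      MvPolynomial.eval ![(p.1 : ℂ), (p.2 : ℂ)] P *
        (cexp (-((ε : ℂ) + s * I * E / 2) * (p.1 : ℂ) ^ 2) *
         cexp (-((ε : ℂ) - s * I * E / 2) * (p.2 : ℂ) ^ 2)))) ∧
    Tendsto (fun ε : ℝ => ∫ p : ℝ × ℝ,
      MvPolynomial.eval ![(p.1 : ℂ), (p.2 : ℂ)] P *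
        (cexp (-((ε : ℂ) + s * I * E / 2) * (p.1 : ℂ) ^ 2) *
         cexp (-((ε : ℂ) - s * I * E / 2) * (p.2 : ℂ) ^ 2)))
      (nhdsWithin (0 : ℝ) (Set.Ioi 0)) (nhds (gL (s * I * E / 2) P)) := by
  have hsne : s ≠ 0 := by rcases hs with rfl | rfl <;> norm_num
  induction P using MvPolynomial.induction_on' with
  | monomial d c =>
    have hr : (fun (ε : ℝ) (p : ℝ × ℝ) =>
      MvPolynomial.eval ![(p.1 : ℂ), (p.2 : ℂ)] (MvPolynomial.monomial d c) *
        (cexp (-((ε : ℂ) + s * I * E / 2) * (p.1 : ℂ) ^ 2) *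
         cexp (-((ε : ℂ) - s * I * E / 2) * (p.2 : ℂ) ^ 2))) =
      fun (ε : ℝ) (p : ℝ × ℝ) => c * (((p.1 : ℂ) ^ (d 0) *
        cexp (-((ε : ℂ) + s * I * E / 2) * (p.1 : ℂ) ^ 2)) * ((p.2 : ℂ) ^ (d 1) *
         cexp (-((ε : ℂ) - s * I * E / 2) * (p.2 : ℂ) ^ 2))) := by
      funext ε p
      rw [MvPolynomial.eval_monomial, Finsupp.prod_fintype _ _ (by simp)]
      simp only [Fin.prod_univ_two, Matrix.cons_val_zero, Matrix.cons_val_one]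
      ring
    have hr' := fun ε => congrFun hr ε
    simp only [hr']
    have hre1 : ∀ ε : ℝ, 0 < ε → 0 < ((ε : ℂ) + s * I * E / 2).re := by
      intro ε h
      simpa using h
    have hre2 : ∀ ε : ℝ, 0 < ε → 0 < ((ε : ℂ) - s * I * E / 2).re := by
      intro ε h
      simpa using h
    constructor
    · intro ε hε
      exact ((gint _ (hre1 ε hε) (d 0)).mul_prod (gint _ (hre2 ε hε) (d 1))).const_mul c
    · have hc1 : ContinuousAt (fun ε : ℝ => gmom ((ε : ℂ) + s * I * E / 2) (d 0)) 0 := by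
        refine ContinuousAt.comp (f := fun ε : ℝ => (ε : ℂ) + s * I * E / 2)
          (g := fun b => gmom b (d 0)) (gmom_cont _ ?_ _) (by fun_prop)
        simp [hsne, hE.ne']
      have hc2 : ContinuousAt (fun ε : ℝ => gmom ((ε : ℂ) - s * I * E / 2) (d 1)) 0 := by
        refine ContinuousAt.comp (f := fun ε : ℝ => (ε : ℂ) - s * I * E / 2)
          (g := fun b => gmom b (d 1)) (gmom_cont _ ?_ _) (by fun_prop)
        simp [hsne, hE.ne']
      have hc : Tendsto (fun ε : ℝ => c * (gmom ((ε : ℂ) + s * I * E / 2) (d 0) *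
          gmom ((ε : ℂ) - s * I * E / 2) (d 1))) (nhdsWithin (0 : ℝ) (Set.Ioi 0))
          (nhds (c * (gmom (s * I * E / 2) (d 0) * gmom (-(s * I * E / 2)) (d 1)))) := by
        have h1 := hc1.tendsto
        have h2 := hc2.tendsto
        simp only [ofReal_zero, zero_add, zero_sub] at h1 h2
        exact ((h1.mul h2).const_mul c).mono_left nhdsWithin_le_nhds
      rw [gL_mono]
      refine hc.congr' ?_
      filter_upwards [self_mem_nhdsWithin] with ε hε
      rw [integral_const_mul, ← gmom_eq _ (hre1 ε hε), ← gmom_eq _ (hre2 ε hε)]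
      congr 1
      exact (integral_prod_mul (μ := volume) (ν := volume) _ _).symm
  | add p q hp hq =>
    simp only [map_add, add_mul]
    refine ⟨fun ε hε => (hp.1 ε hε).add (hq.1 ε hε), (hp.2.add hq.2).congr' ?_⟩
    filter_upwards [self_mem_nhdsWithin] with ε hε
    exact (integral_add (hp.1 ε hε) (hq.1 ε hε)).symm

theorem gmom_zero_val (E s : ℝ) (hE : 0 < E) (hs : s = 1 ∨ s = -1) :
    gmom (s * I * E / 2) 0 * gmom (-(s * I * E / 2)) 0 = ((2 * Real.pi / E : ℝ) : ℂ) := by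
  simp only [gmom]
  have hsne : s ≠ 0 := by rcases hs with rfl | rfl <;> norm_num
  have hss : |s| = 1 := by rcases hs with rfl | rfl <;> norm_num
  set z : ℂ := (Real.pi : ℂ) / (s * I * E / 2) with hz
  have hzc : (Real.pi : ℂ) / (-(s * I * E / 2)) = (starRingEnd ℂ) z := by
    simp only [hz, map_div₀, map_mul, Complex.conj_ofReal, Complex.conj_I, map_ofNat]
    congr 1
    ring
  have hn : ‖z‖ = 2 * Real.pi / E := by
    simp [hz, hss, abs_of_pos hE, abs_of_pos Real.pi_pos]
    field_simp
  have harg : z.arg ≠ Real.pi := by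
    rw [Ne, Complex.arg_eq_pi_iff]
    rintro ⟨_, h⟩
    rw [hz, Complex.div_im] at h
    simp [Real.pi_ne_zero, hsne, hE.ne'] at h
  have hz0 : 0 < ‖z‖ := by
    rw [hn]
    positivity
  rw [hzc]
  have h1 := Complex.cpow_conj z (1 / 2) harg
  have h2 : (starRingEnd ℂ) z ^ (1 / 2 : ℂ) = (starRingEnd ℂ) (z ^ (1 / 2 : ℂ)) := by
    have h4 : (starRingEnd ℂ) (1 / 2 : ℂ) = 1 / 2 := by
      simp only [map_div₀, map_one, map_ofNat]
    rw [h4] at h1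
    rw [h1, Complex.conj_conj]
  rw [h2, Complex.mul_conj, Complex.normSq_eq_norm_sq, ← hn]
  congr 1
  have h3 : (1 / 2 : ℂ) = ((1 / 2 : ℝ) : ℂ) := by push_cast; rfl
  rw [h3, Complex.norm_cpow_real, ← Real.rpow_natCast, ← Real.rpow_mul (norm_nonneg z)]
  simp

theorem Fge_lim (E : ℝ) (hE : 0 < E) (n k : ℕ) (s : ℝ) (hs : s = 1 ∨ s = -1) :
    Filter.Tendsto
      (fun ε : ℝ => ∫ p : ℝ × ℝ,
        ((Real.exp (-(ε * (p.1 ^ 2 + p.2 ^ 2))) : ℝ) : ℂ) * Fge E s (n + k) n p.1 p.2)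
      (nhdsWithin (0 : ℝ) (Set.Ioi 0)) (nhds (if k = 0 then 1 else 0)) := by
  have hss : (s : ℂ) * s = 1 := by rcases hs with rfl | rfl <;> norm_num
  have hsne : (s : ℂ) ≠ 0 := by rcases hs with rfl | rfl <;> norm_num
  have hEne : (E : ℂ) ≠ 0 := by exact_mod_cast hE.ne'
  set b : ℂ := s * I * E / 2 with hbdef
  have hb : b ≠ 0 := by simp [hbdef, hsne, hEne]
  set u : MvPolynomial (Fin 2) ℂ :=
    MvPolynomial.X 0 - MvPolynomial.C (s : ℂ) * MvPolynomial.X 1 with hu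
  set v : MvPolynomial (Fin 2) ℂ :=
    MvPolynomial.X 0 + MvPolynomial.C (s : ℂ) * MvPolynomial.X 1 with hv
  set K : ℂ := ((E / (2 * Real.pi) : ℝ) : ℂ) *
    ((Real.sqrt ((n + k).factorial * n.factorial) : ℝ) : ℂ) *
    (Complex.exp ((s : ℂ) * Complex.I * (Real.pi : ℂ) / 4) * ((Real.sqrt E : ℝ) : ℂ)) ^ k with hK
  set w : ℕ → ℂ := fun p => (-1 : ℂ) ^ p /
        (((n + k - p).factorial : ℂ) * ((n - p).factorial : ℂ) * (p.factorial : ℂ)) with hw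
  set P : MvPolynomial (Fin 2) ℂ := K • ∑ p ∈ Finset.range (n + 1),
    w p • ((2 * b) ^ (n - p) • (u ^ (k + (n - p)) * v ^ (n - p))) with hP
  have hlim := (gL_tendsto E s hE hs P).2
  have hval : gL b P = if k = 0 then 1 else 0 := by
    rw [hP, map_smul, map_sum]
    simp only [map_smul, smul_eq_mul]
    simp only [hu, hv, gL_val b s hb hss]
    by_cases hk : k = 0
    · subst hk
      simp only [if_true]
      rw [gmom_zero_val E s hE hs]
      have hsum : ∑ p ∈ Finset.range (n + 1), w p * (2 ^ (n - p) * ((n - p).factorial : ℂ) *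
          ((2 * Real.pi / E : ℝ) : ℂ)) = ((2 * Real.pi / E : ℝ) : ℂ) / (n.factorial : ℂ) := by
        have hbin := add_pow (-1 : ℂ) 2 n
        have h1 : (-1 : ℂ) + 2 = 1 := by norm_num
        rw [h1, one_pow] at hbin
        rw [← mul_one (((2 * Real.pi / E : ℝ) : ℂ) / (n.factorial : ℂ)), hbin, Finset.mul_sum]
        refine Finset.sum_congr rfl fun p hp => ?_
        have hpn : p ≤ n := Nat.lt_succ_iff.mp (Finset.mem_range.mp hp)
        rw [Nat.cast_choose ℂ hpn]
        simp only [hw, add_zero]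
        have f1 : ((n - p).factorial : ℂ) ≠ 0 := by exact_mod_cast (n - p).factorial_ne_zero
        have f2 : (p.factorial : ℂ) ≠ 0 := by exact_mod_cast p.factorial_ne_zero
        have f3 : (n.factorial : ℂ) ≠ 0 := by exact_mod_cast n.factorial_ne_zero
        field_simp
      rw [hsum, hK]
      have f3 : (n.factorial : ℂ) ≠ 0 := by exact_mod_cast n.factorial_ne_zero
      have f4 : (Real.pi : ℂ) ≠ 0 := by exact_mod_cast Real.pi_ne_zero
      rw [add_zero, Real.sqrt_mul_self (Nat.cast_nonneg _)]
      push_cast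
      field_simp
    · simp [hk]
  rw [hval] at hlim
  refine hlim.congr fun ε => integral_congr_ae (Eventually.of_forall fun q => ?_)
  obtain ⟨t, x⟩ := q
  simp only
  have hex : (cexp (-((ε : ℂ) + s * I * E / 2) * (t : ℂ) ^ 2) *
         cexp (-((ε : ℂ) - s * I * E / 2) * (x : ℂ) ^ 2)) =
      ((Real.exp (-(ε * (t ^ 2 + x ^ 2))) : ℝ) : ℂ) *
      Complex.exp (-(s : ℂ) * Complex.I * (E : ℂ) * ((t : ℂ) ^ 2 - (x : ℂ) ^ 2) / 2) := by
    rw [Complex.ofReal_exp, ← Complex.exp_add, ← Complex.exp_add]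
    congr 1
    push_cast
    ring
  have hPe : MvPolynomial.eval ![(t : ℂ), (x : ℂ)] P =
      K * (((t : ℂ) - (s : ℂ) * (x : ℂ)) ^ k * ∑ p ∈ Finset.range (n + 1),
      ((s : ℂ) * Complex.I * (E : ℂ) * ((t : ℂ) ^ 2 - (x : ℂ) ^ 2)) ^ (n - p) * (-1 : ℂ) ^ p /
        (((n + k - p).factorial : ℂ) * ((n - p).factorial : ℂ) * (p.factorial : ℂ))) := by
    rw [hP, MvPolynomial.smul_eval, map_sum]
    congr 1
    rw [Finset.mul_sum]
    refine Finset.sum_congr rfl fun p _ => ?_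
    have huv : (t : ℂ) ^ 2 - (x : ℂ) ^ 2 = (t - s * x) * (t + s * x) := by
      linear_combination (x : ℂ) ^ 2 * hss
    have h2b : (s : ℂ) * I * E = 2 * b := by
      rw [hbdef]
      ring
    rw [huv, h2b]
    simp [hu, hv, hw, MvPolynomial.smul_eval]
    generalize (t : ℂ) - s * x = y
    generalize (t : ℂ) + s * x = z
    ring
  rw [hex, hPe, Fge, hK, Nat.add_sub_cancel_left]
  ring

/-- the regularized integral of `F^±_{n,m}` over `ℝ²` exists and
equals the Kronecker delta `δ_{nm}`. -/
theorem Fmn_integral_delta (E : ℝ) (hE : 0 < E) (n m : ℕ) (s : ℝ)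
    (hs : s = 1 ∨ s = -1) :
    Filter.Tendsto
      (fun ε : ℝ => ∫ p : ℝ × ℝ,
        ((Real.exp (-(ε * (p.1 ^ 2 + p.2 ^ 2))) : ℝ) : ℂ) * Fmn E s n m p.1 p.2)
      (nhdsWithin (0 : ℝ) (Set.Ioi 0)) (nhds (if n = m then 1 else 0)) := by
  by_cases h : m ≤ n
  · obtain ⟨k, rfl⟩ := Nat.exists_eq_add_of_le h
    have hk : (m + k = m) ↔ k = 0 := by omega
    simp only [Fmn, if_pos h, hk]
    exact Fge_lim E hE m k s hs
  · obtain ⟨k, rfl⟩ := Nat.exists_eq_add_of_le (le_of_not_ge h)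
    have hk : ¬ (n = n + k) := by omega
    have hk0 : k ≠ 0 := by omega
    have hs' : -s = 1 ∨ -s = -1 := by
      rcases hs with rfl | rfl <;> norm_num
    have hl := Fge_lim E hE n k (-s) hs'
    have hl2 := (Complex.continuous_conj.tendsto _).comp hl
    simp only [hk0, if_false, map_zero] at hl2
    simp only [Fmn, if_neg h, if_neg hk]
    refine hl2.congr fun ε => ?_
    simp only [Function.comp_apply]
    rw [← integral_conj]
    simp only [map_mul, Complex.conj_ofReal]
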